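/- Let α > 1 and ε ∈ (0,1) be given. Then there exists h₀ > 0 such that for all h ∈ (0, h₀], every complex number z satisfying the resonance equation h^(−α)·exp(2iz/h) − h^(−α) + 2iz/h = 0 and ε ≤ |z| ≤ 1/ε obeys |Im z + (Re z)²·h^(2α−1)| ≤ 7·h^(2α+1)·(ln(h^(−α)))² + 34·ε^(−4)·h^(4α−3). -/

import Mathlib

open Complex Real

/-!
In the variable `w = 2z/h` and with `a = h ^ α` the resonance equation reads `exp (iw) = 1 - iaw`.
Comparing squared moduli gives `exp (-2 Im w) = 1 + u` with `u = 2a Im w + a²|w|²`. This forces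
`Im w ≤ 0`, hence `0 ≤ u ≤ a²|w|²`, and `-2 Im w = log (1 + u)` differs from `u` by at most
`u² / 2`. Solving for `Im w` leaves `-a² (Re w)² / 2` up to terms of order `a³|w|²` and `a⁴|w|⁴`;
the former is absorbed into `a²` and `a⁴|w|⁴` by the arithmetic-geometric mean inequality.
-/

lemma sub_sq_div_two_le_log_one_add {x : ℝ} (hx : 0 ≤ x) : x - x ^ 2 / 2 ≤ Real.log (1 + x) := by
  refine le_trans ?_ (Real.le_log_one_add_of_nonneg hx)
  rw [le_div_iff₀ (by positivity)]
  linarith [pow_nonneg hx 3]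

lemma one_le_log_rpow_neg_sq {α h : ℝ} (hα : 1 ≤ α) (hpos : 0 < h) (hle : h ≤ Real.exp (-1)) :
    1 ≤ Real.log (h ^ (-α)) ^ 2 := by
  have hlog : Real.log h ≤ -1 := (Real.log_le_iff_le_exp hpos).mpr hle
  rw [Real.log_rpow hpos]
  exact one_le_pow₀ (by nlinarith)

lemma pow_le_rpow_neg_natCast {x ε : ℝ} (hx : 0 ≤ x) (hε : 0 ≤ ε) (hxε : x ≤ 1 / ε) (n : ℕ) :
    x ^ n ≤ ε ^ (-n : ℝ) :=
  calc x ^ n ≤ (1 / ε) ^ n := by gcongr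
    _ = ε ^ (-n : ℝ) := by rw [Real.rpow_neg hε, Real.rpow_natCast, one_div, inv_pow]

/-- The resonance equation in the dimensionless variable `w = 2z/h`, where `a` is the reciprocal
of the coupling constant (`a = h ^ α` for the coupling `h ^ (-α)`). -/
def IsScaledResonance (a : ℝ) (w : ℂ) : Prop :=
  Complex.exp (w * I) = 1 - a * w * I

lemma isScaledResonance_of_resonance_eq {V h : ℝ} (hV : V ≠ 0) {z : ℂ}
    (hz : (V : ℂ) * Complex.exp (2 * I * z / h) - V + 2 * I * z / h = 0) :
    IsScaledResonance V⁻¹ ((2 / h : ℝ) * z) := by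
  have hmul : ((V⁻¹ : ℝ) : ℂ) * V = 1 := mod_cast inv_mul_cancel₀ hV
  have harg : ((2 / h : ℝ) : ℂ) * z * I = 2 * I * z / h := by push_cast; ring
  rw [IsScaledResonance, mul_assoc ((V⁻¹ : ℝ) : ℂ), harg]
  linear_combination ((V⁻¹ : ℝ) : ℂ) * hz + (1 - Complex.exp (2 * I * z / h)) * hmul

namespace IsScaledResonance

variable {a : ℝ} {w : ℂ}

lemma exp_neg_two_mul_im (hw : IsScaledResonance a w) :
    Real.exp (-2 * w.im) = 1 + (2 * a * w.im + (a * ‖w‖) ^ 2) :=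
  calc Real.exp (-2 * w.im) = ‖Complex.exp (w * I)‖ ^ 2 := by
        rw [Complex.norm_exp, mul_I_re, ← Real.exp_nat_mul]; congr 1; push_cast; ring
    _ = ‖1 - a * w * I‖ ^ 2 := by rw [hw]
    _ = 1 + (2 * a * w.im + (a * ‖w‖) ^ 2) := by
        simp only [mul_pow, Complex.sq_norm, normSq_apply, sub_re, sub_im, one_re, one_im,
          mul_I_re, mul_I_im, re_ofReal_mul, im_ofReal_mul]
        ring

lemma im_nonpos (ha : 0 ≤ a) (hw : IsScaledResonance a w) : w.im ≤ 0 := by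
  by_contra! him
  have hlt : Real.exp (-2 * w.im) < 1 := Real.exp_lt_one_iff.mpr (by linarith)
  have hnonneg : 0 ≤ 2 * a * w.im + (a * ‖w‖) ^ 2 := by positivity
  linarith [hw.exp_neg_two_mul_im]

lemma mul_im_nonpos (ha : 0 ≤ a) (hw : IsScaledResonance a w) : a * w.im ≤ 0 :=
  mul_nonpos_of_nonneg_of_nonpos ha (hw.im_nonpos ha)

lemma two_mul_mul_im_add_sq_nonneg (ha : 0 ≤ a) (hw : IsScaledResonance a w) :
    0 ≤ 2 * a * w.im + (a * ‖w‖) ^ 2 := by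
  have hone : 1 ≤ Real.exp (-2 * w.im) := Real.one_le_exp (by linarith [hw.im_nonpos ha])
  linarith [hw.exp_neg_two_mul_im]

lemma neg_two_mul_im_le (ha : 0 ≤ a) (hw : IsScaledResonance a w) :
    -2 * w.im ≤ (a * ‖w‖) ^ 2 := by
  linarith [Real.add_one_le_exp (-2 * w.im), hw.exp_neg_two_mul_im, hw.mul_im_nonpos ha]

lemma neg_mul_im_le (ha : 0 ≤ a) (hw : IsScaledResonance a w) :
    -(a * w.im) ≤ (a ^ 2 + (a * ‖w‖) ^ 4) / 4 :=
  calc -(a * w.im) = a * (-2 * w.im) / 2 := by ring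
    _ ≤ a * (a * ‖w‖) ^ 2 / 2 := by
      have him := hw.neg_two_mul_im_le ha
      gcongr
    _ ≤ (a ^ 2 + (a * ‖w‖) ^ 4) / 4 := by linarith [two_mul_le_add_sq a ((a * ‖w‖) ^ 2)]

lemma sq_mul_im_le (ha : 0 ≤ a) (hw : IsScaledResonance a w) :
    (a * w.im) ^ 2 ≤ (a * ‖w‖) ^ 4 / 4 :=
  calc (a * w.im) ^ 2 = (-(a * w.im)) ^ 2 := (neg_sq _).symm
    _ ≤ ((a * ‖w‖) ^ 2 / 2) ^ 2 := by
      refine pow_le_pow_left₀ (neg_nonneg.mpr (hw.mul_im_nonpos ha)) ?_ 2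
      linarith [hw.two_mul_mul_im_add_sq_nonneg ha]
    _ = (a * ‖w‖) ^ 4 / 4 := by ring

theorem abs_im_add_le (ha : 0 ≤ a) (hw : IsScaledResonance a w) :
    |w.im + (a * w.re) ^ 2 / 2| ≤ a ^ 2 / 4 + (a * ‖w‖) ^ 4 / 2 := by
  obtain ⟨u, hu⟩ : ∃ u, u = 2 * a * w.im + (a * ‖w‖) ^ 2 := ⟨_, rfl⟩
  have hu_nonneg : 0 ≤ u := hu ▸ hw.two_mul_mul_im_add_sq_nonneg ha
  have hu_le : u ≤ (a * ‖w‖) ^ 2 := by linarith [hw.mul_im_nonpos ha]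
  have hu_sq : u ^ 2 ≤ (a * ‖w‖) ^ 4 :=
    calc u ^ 2 ≤ ((a * ‖w‖) ^ 2) ^ 2 := by gcongr
      _ = (a * ‖w‖) ^ 4 := by ring
  have hlog : Real.log (1 + u) = -2 * w.im := by rw [hu, ← hw.exp_neg_two_mul_im, Real.log_exp]
  have hlog_le : Real.log (1 + u) ≤ u := by
    linarith [Real.log_le_sub_one_of_pos (by linarith : 0 < 1 + u)]
  have hle_log : u - u ^ 2 / 2 ≤ Real.log (1 + u) := sub_sq_div_two_le_log_one_add hu_nonneg
  have hexpand : w.im + (a * w.re) ^ 2 / 2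
      = (u - Real.log (1 + u)) / 2 - a * w.im - (a * w.im) ^ 2 / 2 := by
    rw [hlog, hu, mul_pow a ‖w‖, Complex.sq_norm, normSq_apply]; ring
  rw [hexpand, abs_le]
  constructor
  · linarith [hw.mul_im_nonpos ha, hw.sq_mul_im_le ha, sq_nonneg a, sq_nonneg (a * w.im)]
  · linarith [hw.neg_mul_im_le ha, sq_nonneg (a * w.im)]

theorem abs_im_add_le_unscaled {h : ℝ} {z : ℂ} (ha : 0 ≤ a) (hpos : 0 < h)
    (hz : IsScaledResonance a ((2 / h : ℝ) * z)) :
    |z.im + z.re ^ 2 * (a ^ 2 / h)| ≤ a ^ 2 * h / 8 + 4 * ‖z‖ ^ 4 * (a ^ 4 / h ^ 3) := by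
  have hbound := hz.abs_im_add_le ha
  rw [im_ofReal_mul, re_ofReal_mul, norm_mul, norm_real, Real.norm_of_nonneg (by positivity)]
    at hbound
  calc |z.im + z.re ^ 2 * (a ^ 2 / h)|
      = |h / 2 * (2 / h * z.im + (a * (2 / h * z.re)) ^ 2 / 2)| := by
        congr 1; field_simp
    _ = h / 2 * |2 / h * z.im + (a * (2 / h * z.re)) ^ 2 / 2| := by
        rw [abs_mul, abs_of_pos (by positivity)]
    _ ≤ h / 2 * (a ^ 2 / 4 + (a * (2 / h * ‖z‖)) ^ 4 / 2) := by gcongr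
    _ = a ^ 2 * h / 8 + 4 * ‖z‖ ^ 4 * (a ^ 4 / h ^ 3) := by field_simp; ring

end IsScaledResonance

theorem resonance_width_alpha_big_general {α h : ℝ} (hpos : 0 < h) {z : ℂ}
    (hz : ((h ^ (-α) : ℝ) : ℂ) * Complex.exp (2 * I * z / h) - ((h ^ (-α) : ℝ) : ℂ)
      + 2 * I * z / h = 0) :
    |z.im + z.re ^ 2 * h ^ (2 * α - 1)|
      ≤ h ^ (2 * α + 1) / 8 + 4 * ‖z‖ ^ 4 * h ^ (4 * α - 3) := by
  have hpow (n : ℕ) : h ^ (n * α) = (h ^ α) ^ n := by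
    rw [mul_comm, Real.rpow_mul_natCast hpos.le]
  have hsub_one : h ^ (2 * α - 1) = (h ^ α) ^ 2 / h := by
    rw [Real.rpow_sub_one hpos.ne']; exact congrArg (· / h) (hpow 2)
  have hadd_one : h ^ (2 * α + 1) = (h ^ α) ^ 2 * h := by
    rw [Real.rpow_add_one hpos.ne']; exact congrArg (· * h) (hpow 2)
  have hsub_three : h ^ (4 * α - 3) = (h ^ α) ^ 4 / h ^ 3 := by
    rw [Real.rpow_sub hpos]; exact congrArg₂ (· / ·) (hpow 4) (Real.rpow_natCast h 3)
  have hscaled := isScaledResonance_of_resonance_eq (Real.rpow_pos_of_pos hpos _).ne' hz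
  rw [Real.rpow_neg hpos.le, inv_inv] at hscaled
  rw [hsub_one, hadd_one, hsub_three]
  exact hscaled.abs_im_add_le_unscaled (by positivity) hpos

theorem resonance_width_alpha_big (α ε : ℝ) (hα : 1 < α) (hε : ε ∈ Set.Ioo (0:ℝ) 1) :
    ∃ h₀ > 0, ∀ h : ℝ, h ∈ Set.Ioc 0 h₀ → ∀ z : ℂ,
      ((h ^ (-α) : ℝ) : ℂ) * Complex.exp (2 * Complex.I * z / (h : ℂ))
          - ((h ^ (-α) : ℝ) : ℂ) + 2 * Complex.I * z / (h : ℂ) = 0 →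
      ε ≤ ‖z‖ → ‖z‖ ≤ 1 / ε →
      |z.im + z.re ^ 2 * h ^ (2 * α - 1)|
        ≤ 7 * h ^ (2 * α + 1) * (Real.log (h ^ (-α))) ^ 2
          + 34 * ε ^ (-4 : ℝ) * h ^ (4 * α - 3) := by
  refine ⟨Real.exp (-1), Real.exp_pos _, fun h ⟨hpos, hle⟩ z hz _ hzε ↦
    (resonance_width_alpha_big_general hpos hz).trans (add_le_add ?_ ?_)⟩
  · have hlog := one_le_log_rpow_neg_sq hα.le hpos hle
    have hfactor : 0 < h ^ (2 * α + 1) := by positivity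
    nlinarith
  · have hnorm : ‖z‖ ^ 4 ≤ ε ^ (-4 : ℝ) := mod_cast
      pow_le_rpow_neg_natCast (norm_nonneg z) hε.1.le hzε 4
    gcongr
    norm_num
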